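/- arXiv:1708.08445 — 2 statements merged into one kernel-verified Lean document; each statement's English description precedes it below -/
import Mathlib

section
/- For every M ∈ N_4^+ regarded as a matrix function of its Jacobi coordinates x_{12},…,x_{34}, one has L_{123}(L_{124}(L_{134}(L_{234}(M)))) = L_{234}(L_{134}(L_{124}(L_{123}(M)))) = M̄′ and R_{123}(R_{124}(R_{134}(R_{234}(M)))) = R_{234}(R_{134}(R_{124}(R_{123}(M)))) = M̄″; in particular the transformations L_{abc} and R_{abc} satisfy the tetrahedron equation. -/
/-! Put `A = L₁₂₃ L₁₂₄ L₁₃₄ L₂₃₄ (M)` and `B = R₁₂₃ R₁₂₄ R₁₃₄ R₂₃₄ (M)`. With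
`E = diag(1/(x₁₂x₁₃x₁₄), -x₁₂/(x₂₃x₂₄), x₁₃x₂₃/x₃₄, -x₁₄x₂₄x₃₄)`, multiplying out explicit
`4 × 4` matrices gives `P M̄ P = A P E B` (`bar_factorization`). Since `M̄′` and `M̄″` come from a
second factorization of the same shape, it remains to see that such a factorization
is unique (`antidiagonal_decomp_unique`). If `U₁ P D₁ V₁ = U₂ P D₂ V₂` is invertible, with `Uᵢ`,
`Vᵢ` unipotent upper triangular, then `P (U₂⁻¹ U₁) P = D₂ V₂ V₁⁻¹ D₁⁻¹` is both lower and upper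
triangular, so `U₂⁻¹ U₁` is diagonal, hence `1` by unipotency; comparing diagonals in
`D₁ V₁ = D₂ V₂` then gives `D₁ = D₂` and `V₁ = V₂`. The tetrahedron equations themselves
are equalities of monomials in the Jacobi coordinates. -/

open Matrix BigOperators

noncomputable section

/-- The dilogarithm function `Li₂`. -/
def dilog (x : ℝ) : ℝ := ∑' k : ℕ, x ^ (k + 1) / ((k : ℝ) + 1) ^ 2

/-- The Rogers dilogarithm `L(x) = Li₂(x) + (1/2) log x log (1-x)`. -/
def rogersL (x : ℝ) : ℝ := dilog x + (1 / 2) * Real.log x * Real.log (1 - x)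

/-- `l(x) = (6/π²) L(x/(1+x))`. -/
def ell (x : ℝ) : ℝ := 6 / Real.pi ^ 2 * rogersL (x / (1 + x))

/-- The minor of `M` on rows `I` and columns `J` (both taken in increasing order);
by convention it is `0` if the cardinalities disagree, and `1` for `I = J = ∅`. -/
def gminor {n : ℕ} (M : Matrix (Fin n) (Fin n) ℝ) (I J : Finset (Fin n)) : ℝ :=
  if h : J.card = I.card then
    Matrix.det (Matrix.of fun i j : Fin I.card =>
      M (I.orderEmbOfFin rfl i) (J.orderEmbOfFin h j))
  else 0

/-- The 1-based interval `[a,b]` regarded as a finset of `Fin n`. -/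
def iv (n a b : ℕ) : Finset (Fin n) :=
  Finset.univ.filter fun i => a ≤ (i : ℕ) + 1 ∧ (i : ℕ) + 1 ≤ b

/-- The last `k` columns (as a finset of `Fin n`). -/
def lastCols (n k : ℕ) : Finset (Fin n) := Finset.univ.filter fun j => n - k ≤ (j : ℕ)

/-- The first `k` rows (as a finset of `Fin n`). -/
def firstRows (n k : ℕ) : Finset (Fin n) := Finset.univ.filter fun i => (i : ℕ) < k

/-- The right flag minor `Δ_I`: rows `I`, last `|I|` columns. -/
def flagR {n : ℕ} (M : Matrix (Fin n) (Fin n) ℝ) (I : Finset (Fin n)) : ℝ :=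
  gminor M I (lastCols n I.card)

/-- The upper flag minor `Δ^J`: first `|J|` rows, columns `J`. -/
def flagU {n : ℕ} (M : Matrix (Fin n) (Fin n) ℝ) (J : Finset (Fin n)) : ℝ :=
  gminor M (firstRows n J.card) J

/-- `Ī = {n+1-a : a ∈ I}` (in 1-based labelling; `Fin.rev` in 0-based labelling). -/
def barSet {n : ℕ} (I : Finset (Fin n)) : Finset (Fin n) := I.image Fin.rev

/-- `B_n`: invertible upper triangular real matrices. -/
def Bset (n : ℕ) : Set (Matrix (Fin n) (Fin n) ℝ) :=
  {M | M.BlockTriangular id ∧ IsUnit M.det}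

/-- `N_n`: unipotent upper triangular real matrices. -/
def Nset (n : ℕ) : Set (Matrix (Fin n) (Fin n) ℝ) :=
  {M | M.BlockTriangular id ∧ ∀ i, M i i = 1}

/-- `M` is totally positive with respect to a class `S` of matrices: `M ∈ S` and every minor
that does not vanish identically on `S` is positive. -/
def totPos {n : ℕ} (S : Set (Matrix (Fin n) (Fin n) ℝ)) (M : Matrix (Fin n) (Fin n) ℝ) : Prop :=
  M ∈ S ∧ ∀ I J : Finset (Fin n), I.card = J.card →
    (∃ A ∈ S, gminor A I J ≠ 0) → 0 < gminor M I J

/-- `B_n^+`: totally positive matrices in `B_n`. -/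
def Bpos (n : ℕ) (M : Matrix (Fin n) (Fin n) ℝ) : Prop := totPos (Bset n) M

/-- `N_n^+`: totally positive matrices in `N_n`. -/
def Npos (n : ℕ) (M : Matrix (Fin n) (Fin n) ℝ) : Prop := totPos (Nset n) M

/-- The permutation matrix `P` with `P_{ij} = δ_{i+j,n+1}` (1-based). -/
def Pmat (n : ℕ) : Matrix (Fin n) (Fin n) ℝ :=
  Matrix.of fun i j => if (i : ℕ) + (j : ℕ) + 2 = n + 1 then 1 else 0

/-- `Decomp n M M₁ M₂ D` asserts `P M P = M₁ P D M₂` with `M₁, M₂ ∈ N_n^+` and `D` diagonal;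
i.e. `M₁ = M′`, `M₂ = M″`, `D = D_M`. -/
def Decomp (n : ℕ) (M M₁ M₂ D : Matrix (Fin n) (Fin n) ℝ) : Prop :=
  Npos n M₁ ∧ Npos n M₂ ∧ D.IsDiag ∧
    Pmat n * M * Pmat n = M₁ * Pmat n * D * M₂

/-- `J_k(x) = exp(x e_k) = 1 + x e_k` where `(e_k)_{ij} = δ_{ik} δ_{j,k+1}` (1-based). -/
def Jmat (n : ℕ) (k : ℕ) (x : ℝ) : Matrix (Fin n) (Fin n) ℝ :=
  1 + Matrix.of fun (i j : Fin n) => if (i : ℕ) + 1 = k ∧ (j : ℕ) = k then x else 0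

/-- The matrix `𝕁_1 ⋯ 𝕁_{n-1}` with `𝕁_k = J_k(x_{1,k+1}) ⋯ J_1(x_{k,k+1})`,
for a (1-based) coordinate function `x`. -/
def jacobiMat (n : ℕ) (x : ℕ → ℕ → ℝ) : Matrix (Fin n) (Fin n) ℝ :=
  (((List.range (n - 1)).map fun p =>
      (((List.range (p + 1)).map fun m => Jmat n (p + 1 - m) (x (m + 1) (p + 2))).prod)).prod)

/-- `x` is the collection of Jacobi coordinates of `M`: all `x i j` (for `1 ≤ i < j ≤ n`) are
positive and `M = 𝕁_1 ⋯ 𝕁_{n-1}`. -/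
def IsJacobi (n : ℕ) (M : Matrix (Fin n) (Fin n) ℝ) (x : ℕ → ℕ → ℝ) : Prop :=
  (∀ i j, 1 ≤ i → i < j → j ≤ n → 0 < x i j) ∧ M = jacobiMat n x

/-- The Y-variable `Y_{abc}(M)`. -/
def Yr (n : ℕ) (M : Matrix (Fin n) (Fin n) ℝ) (a b c : ℕ) : ℝ :=
  flagR M (iv n a (b-1) ∪ iv n (c+1) n) * flagR M (iv n (a+1) b ∪ iv n c n) /
    (flagR M (iv n a b ∪ iv n (c+1) n) * flagR M (iv n (a+1) (b-1) ∪ iv n c n))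

/-- The Y-variable `Ỹ_{abc}(M)`. -/
def Ytr (n : ℕ) (M : Matrix (Fin n) (Fin n) ℝ) (a b c : ℕ) : ℝ :=
  flagR M (iv n 1 a ∪ iv n (b+1) (c-1)) * flagR M (iv n 1 (a-1) ∪ iv n b c) /
    (flagR M (iv n 1 a ∪ iv n b (c-1)) * flagR M (iv n 1 (a-1) ∪ iv n (b+1) c))

/-- The Y-variable `Y^{abc}(M)`. -/
def Yu (n : ℕ) (M : Matrix (Fin n) (Fin n) ℝ) (a b c : ℕ) : ℝ :=
  flagU M (iv n a b ∪ iv n (c+1) n) * flagU M (iv n (a+1) (b-1) ∪ iv n c n) /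
    (flagU M (iv n a (b-1) ∪ iv n (c+1) n) * flagU M (iv n (a+1) b ∪ iv n c n))

/-- The Y-variable `Ỹ^{abc}(M)`. -/
def Ytu (n : ℕ) (M : Matrix (Fin n) (Fin n) ℝ) (a b c : ℕ) : ℝ :=
  flagU M (iv n 1 a ∪ iv n b (c-1)) * flagU M (iv n 1 (a-1) ∪ iv n (b+1) c) /
    (flagU M (iv n 1 a ∪ iv n (b+1) (c-1)) * flagU M (iv n 1 (a-1) ∪ iv n b c))

/-- The discrete tetrahedron `T_n = {(a,b,c) : 1 ≤ a < b < c ≤ n}`. -/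
def Tset (n : ℕ) : Finset (ℕ × ℕ × ℕ) :=
  ((Finset.range (n+1)) ×ˢ (Finset.range (n+1)) ×ˢ (Finset.range (n+1))).filter
    fun t => 1 ≤ t.1 ∧ t.1 < t.2.1 ∧ t.2.1 < t.2.2 ∧ t.2.2 ≤ n


/-- The change of Jacobi coordinates `L_{abc}` of (3.6). -/
def Lmap (a b c : ℕ) (x : ℕ → ℕ → ℝ) : ℕ → ℕ → ℝ := fun i j =>
  if i = a ∧ j = b then x a c
  else if i = a ∧ j = c then x a b
  else if i = b ∧ j = c then x a c * x b c / x a b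
  else x i j

/-- The change of Jacobi coordinates `R_{abc}` of (3.7). -/
def Rmap (a b c : ℕ) (x : ℕ → ℕ → ℝ) : ℕ → ℕ → ℝ := fun i j =>
  if i = a ∧ j = b then x a b * x a c / x b c
  else if i = a ∧ j = c then x b c
  else if i = b ∧ j = c then x a c
  else x i j

lemma Pmat_mul_self (n : ℕ) : Pmat n * Pmat n = 1 := by
  ext i j
  rw [Matrix.mul_apply, Finset.sum_eq_single (Fin.rev i)]
  · have hi := i.isLt
    have hj := j.isLt
    simp only [Pmat, Matrix.of_apply, Fin.val_rev, Matrix.one_apply, Fin.ext_iff]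
    rw [if_pos (by omega), one_mul]
    exact if_congr (by omega) rfl rfl
  · intro k _ hk
    have h : ¬ ((i : ℕ) + (k : ℕ) + 2 = n + 1) := by
      intro h
      apply hk
      ext
      rw [Fin.val_rev]
      omega
    simp only [Pmat, Matrix.of_apply]
    rw [if_neg h, zero_mul]
  · simp

/-- Conjugation by `P` reverses the order of rows and columns. -/
lemma Pmat_conj_apply (n : ℕ) (X : Matrix (Fin n) (Fin n) ℝ) (i j : Fin n) :
    (Pmat n * X * Pmat n) i j = X (Fin.rev i) (Fin.rev j) := by
  have hP : Pmat n = Matrix.of fun i j => if j = Fin.rev i then (1 : ℝ) else 0 := by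
    ext i j
    have hi := i.isLt
    simp only [Pmat, Matrix.of_apply, Fin.ext_iff, Fin.val_rev]
    exact if_congr (by omega) rfl rfl
  have h : ∀ k, (j = Fin.rev k) ↔ (k = Fin.rev j) := fun k =>
    ⟨fun h => by simp [h], fun h => by simp [h]⟩
  simp [hP, Matrix.mul_apply, h]

lemma isUnit_det_of_mem_Nset {n : ℕ} {U : Matrix (Fin n) (Fin n) ℝ} (hU : U ∈ Nset n) :
    IsUnit U.det := by
  rw [Matrix.det_of_isUpperTriangular hU.1]
  simp [hU.2]

lemma diag_mul_apply {n : ℕ} {D V : Matrix (Fin n) (Fin n) ℝ} (hD : D.IsDiag) (i j : Fin n) :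
    (D * V) i j = D i i * V i j := by
  rw [Matrix.mul_apply, Finset.sum_eq_single i]
  · intro k _ hk
    rw [hD hk.symm, zero_mul]
  · simp

/-- Uniqueness of the factorization `U P D V` of an invertible matrix, with `U`, `V` unipotent
upper triangular and `D` diagonal (the open Bruhat cell). -/
lemma antidiagonal_decomp_unique {n : ℕ} {U₁ V₁ D₁ U₂ V₂ D₂ : Matrix (Fin n) (Fin n) ℝ}
    (hU₁ : U₁ ∈ Nset n) (hV₁ : V₁ ∈ Nset n) (hU₂ : U₂ ∈ Nset n) (hV₂ : V₂ ∈ Nset n)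
    (hD₁ : D₁.IsDiag) (hD₂ : D₂.IsDiag)
    (hdet : IsUnit (U₁ * Pmat n * D₁ * V₁).det)
    (h : U₁ * Pmat n * D₁ * V₁ = U₂ * Pmat n * D₂ * V₂) : U₁ = U₂ ∧ V₁ = V₂ := by
  have hPP := Pmat_mul_self n
  have hD₁det : IsUnit D₁.det := by
    simp only [Matrix.det_mul] at hdet
    exact isUnit_of_mul_isUnit_right (isUnit_of_mul_isUnit_left hdet)
  have hU₂det := isUnit_det_of_mem_Nset hU₂
  have hV₁det := isUnit_det_of_mem_Nset hV₁
  let _ := Matrix.invertibleOfIsUnitDet _ hD₁det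
  let _ := Matrix.invertibleOfIsUnitDet _ hU₂det
  let _ := Matrix.invertibleOfIsUnitDet _ hV₁det
  have diagTri : ∀ {D : Matrix (Fin n) (Fin n) ℝ}, D.IsDiag → D.BlockTriangular id :=
    fun hD i j hij => hD (ne_of_gt hij)
  set X := U₂⁻¹ * U₁ with hX
  have hXtri : X.BlockTriangular id :=
    (Matrix.blockTriangular_inv_of_blockTriangular hU₂.1).mul hU₁.1
  have hUX : U₁ = U₂ * X := by
    rw [hX, Matrix.mul_nonsing_inv_cancel_left _ _ hU₂det]
  have hQ : Pmat n * X * Pmat n * (D₁ * V₁) = D₂ * V₂ := by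
    have h2 : U₂⁻¹ * (U₁ * Pmat n * D₁ * V₁) = Pmat n * D₂ * V₂ := by
      rw [h]
      simp only [Matrix.mul_assoc]
      rw [Matrix.nonsing_inv_mul_cancel_left _ _ hU₂det]
    calc Pmat n * X * Pmat n * (D₁ * V₁)
        = Pmat n * (U₂⁻¹ * (U₁ * Pmat n * D₁ * V₁)) := by rw [hX]; simp only [Matrix.mul_assoc]
      _ = (Pmat n * Pmat n) * (D₂ * V₂) := by rw [h2]; simp only [Matrix.mul_assoc]
      _ = D₂ * V₂ := by rw [hPP, Matrix.one_mul]
  have hQtri : (Pmat n * X * Pmat n).BlockTriangular id := by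
    have hQ' : Pmat n * X * Pmat n = D₂ * V₂ * (V₁⁻¹ * D₁⁻¹) := by
      rw [← hQ, Matrix.mul_assoc _ (D₁ * V₁), Matrix.mul_assoc D₁,
        Matrix.mul_nonsing_inv_cancel_left _ _ hV₁det, Matrix.mul_nonsing_inv _ hD₁det,
        Matrix.mul_one]
    rw [hQ']
    exact ((diagTri hD₂).mul hV₂.1).mul
      ((Matrix.blockTriangular_inv_of_blockTriangular hV₁.1).mul
        (Matrix.blockTriangular_inv_of_blockTriangular (diagTri hD₁)))
  have hX1 : X = 1 := by
    have hoff : ∀ i j, i ≠ j → X i j = 0 := by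
      intro i j hij
      rcases lt_or_gt_of_ne hij with hlt | hgt
      · -- entries above the diagonal of `X` are entries below the diagonal of `P X P`
        have := Pmat_conj_apply n X (Fin.rev i) (Fin.rev j)
        rw [Fin.rev_rev, Fin.rev_rev] at this
        rw [← this]
        exact hQtri (Fin.rev_lt_rev.mpr hlt)
      · exact hXtri hgt
    have hdiag : ∀ i, X i i = 1 := by
      intro i
      have h1 := hU₁.2 i
      rw [hUX, Matrix.mul_apply, Finset.sum_eq_single i, hU₂.2 i, one_mul] at h1
      · exact h1
      · intro k _ hk
        rw [hoff k i hk, mul_zero]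
      · simp
    ext i j
    by_cases hij : i = j
    · subst hij
      simp [hdiag]
    · rw [hoff i j hij, Matrix.one_apply_ne hij]
  rw [hX1, Matrix.mul_one, hPP, Matrix.one_mul] at hQ
  have hDD : D₁ = D₂ := by
    ext i j
    by_cases hij : i = j
    · subst hij
      have := congrFun (congrFun hQ i) i
      rwa [diag_mul_apply hD₁, diag_mul_apply hD₂, hV₁.2, hV₂.2, mul_one, mul_one] at this
    · rw [hD₁ hij, hD₂ hij]
  refine ⟨by rw [hUX, hX1, Matrix.mul_one], ?_⟩
  rw [← hDD] at hQ
  have := congrArg (D₁⁻¹ * ·) hQ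
  simpa only [Matrix.nonsing_inv_mul_cancel_left _ _ hD₁det] using this

/-- The entries of `𝕁₁ 𝕁₂ 𝕁₃` as polynomials in the Jacobi coordinates. -/
lemma jacobiMat_four (x : ℕ → ℕ → ℝ) : jacobiMat 4 x =
    !![1, x 1 2 + x 2 3 + x 3 4, (x 1 2 + x 2 3) * x 2 4 + x 1 2 * x 1 3, x 1 2 * x 1 3 * x 1 4;
       0, 1, x 1 3 + x 2 4, x 1 3 * x 1 4;
       0, 0, 1, x 1 4;
       0, 0, 0, 1] := by
  have h1 : ∀ a, Jmat 4 1 a = !![1, a, 0, 0; 0, 1, 0, 0; 0, 0, 1, 0; 0, 0, 0, 1] := by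
    intro a; ext i j; fin_cases i <;> fin_cases j <;> simp [Jmat]
  have h2 : ∀ a, Jmat 4 2 a = !![1, 0, 0, 0; 0, 1, a, 0; 0, 0, 1, 0; 0, 0, 0, 1] := by
    intro a; ext i j; fin_cases i <;> fin_cases j <;> simp [Jmat]
  have h3 : ∀ a, Jmat 4 3 a = !![1, 0, 0, 0; 0, 1, 0, 0; 0, 0, 1, a; 0, 0, 0, 1] := by
    intro a; ext i j; fin_cases i <;> fin_cases j <;> simp [Jmat]
  simp only [jacobiMat, List.range_succ, List.range_zero, List.nil_append, List.cons_append,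
    List.map_cons, List.map_nil, List.prod_cons, List.prod_nil, Nat.reduceAdd, Nat.reduceSub,
    Matrix.mul_one, h1, h2, h3]
  ext i j
  fin_cases i <;> fin_cases j <;> simp [Matrix.mul_apply, Fin.sum_univ_four] <;> ring

lemma jacobiMat_four_mem_Nset (x : ℕ → ℕ → ℝ) : jacobiMat 4 x ∈ Nset 4 := by
  rw [jacobiMat_four]
  constructor
  · intro i j hij
    fin_cases i <;> fin_cases j <;> first | rfl | exact absurd hij (by decide)
  · intro i
    fin_cases i <;> rfl

/-- The factorization `P M̄ P = A P E B`, with `A` and `B` obtained from the Jacobi coordinates by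
the `L`- and `R`-transformations and `E` an explicit diagonal matrix. -/
lemma bar_factorization (x : ℕ → ℕ → ℝ)
    (h12 : x 1 2 ≠ 0) (h13 : x 1 3 ≠ 0) (h14 : x 1 4 ≠ 0)
    (h23 : x 2 3 ≠ 0) (h24 : x 2 4 ≠ 0) (h34 : x 3 4 ≠ 0) :
    Pmat 4 * (jacobiMat 4 fun i j => (x i j)⁻¹) * Pmat 4 =
      jacobiMat 4 (Lmap 1 2 3 (Lmap 1 2 4 (Lmap 1 3 4 (Lmap 2 3 4 x)))) * Pmat 4 *
        Matrix.diagonal ![1 / (x 1 2 * x 1 3 * x 1 4), -(x 1 2 / (x 2 3 * x 2 4)),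
          x 1 3 * x 2 3 / x 3 4, -(x 1 4 * x 2 4 * x 3 4)] *
        jacobiMat 4 (Rmap 1 2 3 (Rmap 1 2 4 (Rmap 1 3 4 (Rmap 2 3 4 x)))) := by
  have hP : Pmat 4 = !![0, 0, 0, 1; 0, 0, 1, 0; 0, 1, 0, 0; 1, 0, 0, 0] := by
    ext i j; fin_cases i <;> fin_cases j <;> simp [Pmat]
  have hE : ∀ a b c d : ℝ, Matrix.diagonal ![a, b, c, d] =
      !![a, 0, 0, 0; 0, b, 0, 0; 0, 0, c, 0; 0, 0, 0, d] := by
    intro a b c d; ext i j; fin_cases i <;> fin_cases j <;> rfl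
  rw [jacobiMat_four, jacobiMat_four, jacobiMat_four, hP, hE]
  ext i j
  fin_cases i <;> fin_cases j <;>
    simp [Matrix.mul_apply, Fin.sum_univ_four, Lmap, Rmap] <;>
    (try field_simp) <;> (try ring)

/-- For `M ∈ N_4^+` with Jacobi coordinates `x`:
`L_{123}(L_{124}(L_{134}(L_{234}(M)))) = L_{234}(L_{134}(L_{124}(L_{123}(M)))) = M̄′` and
`R_{123}(R_{124}(R_{134}(R_{234}(M)))) = R_{234}(R_{134}(R_{124}(R_{123}(M)))) = M̄″`
(in particular, the transformations `L` and `R` satisfy the tetrahedron equation). -/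
theorem stmt_9 (M : Matrix (Fin 4) (Fin 4) ℝ) (x : ℕ → ℕ → ℝ) (hx : IsJacobi 4 M x)
    (Mb M₁ M₂ D : Matrix (Fin 4) (Fin 4) ℝ)
    (hMb : Mb = jacobiMat 4 fun i j => (x i j)⁻¹)
    (hdec : Decomp 4 Mb M₁ M₂ D) :
    (jacobiMat 4 (Lmap 1 2 3 (Lmap 1 2 4 (Lmap 1 3 4 (Lmap 2 3 4 x)))) =
        jacobiMat 4 (Lmap 2 3 4 (Lmap 1 3 4 (Lmap 1 2 4 (Lmap 1 2 3 x)))) ∧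
      jacobiMat 4 (Lmap 1 2 3 (Lmap 1 2 4 (Lmap 1 3 4 (Lmap 2 3 4 x)))) = M₁) ∧
    (jacobiMat 4 (Rmap 1 2 3 (Rmap 1 2 4 (Rmap 1 3 4 (Rmap 2 3 4 x)))) =
        jacobiMat 4 (Rmap 2 3 4 (Rmap 1 3 4 (Rmap 1 2 4 (Rmap 1 2 3 x)))) ∧
      jacobiMat 4 (Rmap 1 2 3 (Rmap 1 2 4 (Rmap 1 3 4 (Rmap 2 3 4 x)))) = M₂) := by
  have h12 := (hx.1 1 2 (by norm_num) (by norm_num) (by norm_num)).ne'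
  have h13 := (hx.1 1 3 (by norm_num) (by norm_num) (by norm_num)).ne'
  have h14 := (hx.1 1 4 (by norm_num) (by norm_num) (by norm_num)).ne'
  have h23 := (hx.1 2 3 (by norm_num) (by norm_num) (by norm_num)).ne'
  have h24 := (hx.1 2 4 (by norm_num) (by norm_num) (by norm_num)).ne'
  have h34 := (hx.1 3 4 (by norm_num) (by norm_num) (by norm_num)).ne'
  obtain ⟨hM₁, hM₂, hD, hfac⟩ := hdec
  have hbar := bar_factorization x h12 h13 h14 h23 h24 h34
  rw [← hMb] at hbar
  have hdet : IsUnit (Pmat 4 * Mb * Pmat 4).det := by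
    have hP : IsUnit (Pmat 4).det := by
      apply IsUnit.of_mul_eq_one (Pmat 4).det
      rw [← Matrix.det_mul, Pmat_mul_self, Matrix.det_one]
    have hB : IsUnit Mb.det := by
      rw [hMb]
      exact isUnit_det_of_mem_Nset (jacobiMat_four_mem_Nset _)
    rw [Matrix.det_mul, Matrix.det_mul]
    exact (hP.mul hB).mul hP
  obtain ⟨hL, hR⟩ := antidiagonal_decomp_unique (jacobiMat_four_mem_Nset _)
    (jacobiMat_four_mem_Nset _) hM₁.1 hM₂.1 (Matrix.isDiag_diagonal _) hD
    (hbar ▸ hdet) (hbar.symm.trans hfac)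
  refine ⟨⟨?_, hL⟩, ⟨?_, hR⟩⟩
  · -- both sides have the same six Jacobi coordinates
    rw [jacobiMat_four, jacobiMat_four]
    congr 1
    simp [Lmap]
    field_simp
  · rw [jacobiMat_four, jacobiMat_four]
    congr 1
    simp [Rmap]
    field_simp
    simp

end
end

section
/- For every M ∈ N_n^+ and all 1 ≤ i < j ≤ n−1: y_{ij}(M′) = ȳ_{i,n+i−j}(M) and y_{ij}(M″) = ȳ_{j−i,j}(M); moreover y_{ij}(((M′)″)′) = y_{ij}(((M″)′)″) and ȳ_{ij}(((M′)″)′) = ȳ_{ij}(((M″)′)″). -/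
/-!
Everything reduces to the "solid" minors `q s k = solid (ent M) n s k`, with rows `k-s+1, …, k` and
last `s` columns (1-based), for `0 ≤ s ≤ k ≤ n`.

* Multiplying by `𝕁_{n-1}` on the right is a bidiagonal column operation, so by induction
  `q s k` is the monomial `∏_{i ≤ s} ∏_{k < r ≤ n} x i r` in the Jacobi coordinates
  (`solid_jacRec`). Inverting, `x k j = q k (j-1) q (k-1) j / (q (k-1) (j-1) q k j)`
  (`coord_of_jacobi`).
* Multiplying `P M P = M′ P D M″` on the left by `P` gives the Gauss decomposition
  `M P = (P M′ P) D M″`. Expanding minors in the first `s` columns gives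
  `q s k = q s s * q′ s (n-k+s)` (`solid_prime`).
  Minors in the first `k` rows give `q (k-s) k = q k k * q″ s k` (`solid_second`): here
  `q s k` is also the minor on rows `[1, k]` and columns `[1, k-s] ∪ [n-s+1, n]`, since that
  matrix is block triangular with a unipotent corner (`solid_eq_flag`), and reversing the order
  of columns exchanges `s` and `k-s`.

Substituting these relations into the formula for `x k j`, the factors `q s s` and `q k k` cancel
in the ratios `y_{ij}`. This argument only needs the minors `q s k` to be nonzero, which passes
from `M` to `M′` and `M″`; so the last two equalities follow by applying the first two along each
chain without knowing Jacobi coordinates for the intermediate matrices.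
-/

open Matrix BigOperators

noncomputable section

/-- `y_{ij}` as a function of the Jacobi coordinates. -/
def yv (x : ℕ → ℕ → ℝ) (i j : ℕ) : ℝ := x i j / x (i + 1) (j + 1)

/-- `ȳ_{ij}` as a function of the Jacobi coordinates. -/
def ybv (x : ℕ → ℕ → ℝ) (i j : ℕ) : ℝ := x (i + 1) (j + 1) / x i j

/-- Entries of `M` with 0-based natural number indices, extended by `0`. -/
def ent {n : ℕ} (M : Matrix (Fin n) (Fin n) ℝ) (i j : ℕ) : ℝ :=
  if h : i < n ∧ j < n then M ⟨i, h.1⟩ ⟨j, h.2⟩ else 0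

/-- The minor with 0-based rows `k-s, …, k-1` and columns `n-s, …, n-1` of the `ℕ`-indexed
matrix `f`. It is meaningful for `s ≤ k ≤ n`. -/
def solid (f : ℕ → ℕ → ℝ) (n s k : ℕ) : ℝ :=
  Matrix.det (Matrix.of fun a b : Fin s => f (k - s + a) (n - s + b))

/-- `f` is upper unitriangular on indices `< n`. -/
def Unitri (f : ℕ → ℕ → ℝ) (n : ℕ) : Prop :=
  (∀ i j, i < n → j < i → f i j = 0) ∧ ∀ i, i < n → f i i = 1

/-- The entries of the partial product `𝕁_1 ⋯ 𝕁_p`, defined by its recursion on columns. -/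
def jacRec (x : ℕ → ℕ → ℝ) : ℕ → ℕ → ℕ → ℝ
  | 0, i, j => if i = j then 1 else 0
  | p + 1, i, 0 => jacRec x p i 0
  | p + 1, i, j + 1 =>
      jacRec x p i (j + 1) + (if j ≤ p then x (p + 1 - j) (p + 2) else 0) * jacRec x p i j

/-- The formula expressing the Jacobi coordinate `x k j` through the solid minors `q`. -/
def coord (q : ℕ → ℕ → ℝ) (k j : ℕ) : ℝ :=
  q k (j - 1) * q (k - 1) j / (q (k - 1) (j - 1) * q k j)

/-! ### Solid minors of a product of Jacobi matrices -/

lemma jacRec_of_lt (x : ℕ → ℕ → ℝ) (p i j : ℕ) (h : p < j) :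
    jacRec x p i j = if i = j then 1 else 0 := by
  induction p generalizing j with
  | zero => rfl
  | succ p ih =>
    obtain ⟨j, rfl⟩ : ∃ j', j = j' + 1 := ⟨j - 1, by omega⟩
    rw [jacRec, ih _ (by omega), if_neg (show ¬ j ≤ p by omega)]
    simp

lemma jacRec_tri (x : ℕ → ℕ → ℝ) (p i j : ℕ) (h : j ≤ i) :
    jacRec x p i j = if i = j then 1 else 0 := by
  induction p generalizing j with
  | zero => rfl
  | succ p ih =>
    cases j with
    | zero => rw [jacRec, ih _ h]
    | succ j => rw [jacRec, ih _ h, ih j (by omega), if_neg (show ¬ i = j by omega)]; simp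

lemma solid_top {f : ℕ → ℕ → ℝ} {n : ℕ} (hf : Unitri f n) (s : ℕ) (hs : s ≤ n) :
    solid f n s n = 1 := by
  rw [solid, Matrix.det_of_isUpperTriangular]
  · exact Finset.prod_eq_one fun a _ => hf.2 _ (by omega)
  · intro a b hab
    simp only [id, Fin.lt_def] at hab
    exact hf.1 _ _ (by omega) (by omega)

/-- One more factor `𝕁_{p+1}`: on rows `≤ p` the last column of `𝕁_1 ⋯ 𝕁_p` vanishes, so the
solid minor is multiplied by the determinant of a triangular matrix. -/
lemma solid_step (x : ℕ → ℕ → ℝ) (p s k : ℕ) (hs : s ≤ k) (hk : k ≤ p + 1) :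
    solid (jacRec x (p + 1)) (p + 2) s k =
      solid (jacRec x p) (p + 1) s k * ∏ i ∈ Finset.range s, x (i + 1) (p + 2) := by
  have hT : Matrix.det (Matrix.of fun c b : Fin s =>
      if c = b then x (s - b) (p + 2) else if (c : ℕ) = b + 1 then 1 else 0) =
      ∏ i ∈ Finset.range s, x (i + 1) (p + 2) := by
    rw [Matrix.det_of_isLowerTriangular]
    · rw [← Finset.prod_range_reflect, Finset.prod_range]
      refine Finset.prod_congr rfl fun a _ => ?_
      rw [Matrix.of_apply, if_pos rfl]
      congr 1
      omega
    · intro a b hab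
      have hab : (a : ℕ) < b := hab
      rw [Matrix.of_apply, if_neg (by rintro rfl; omega), if_neg (by omega)]
  rw [solid, solid, ← hT, ← Matrix.det_mul]
  congr 1
  ext a b
  rw [Matrix.mul_apply]
  simp only [Matrix.of_apply]
  have hb := b.2
  have ha := a.2
  rw [show p + 2 - s + (b : ℕ) = (p + 1 - s + b) + 1 by omega, jacRec,
    if_pos (show p + 1 - s + (b : ℕ) ≤ p by omega),
    show p + 1 - (p + 1 - s + (b : ℕ)) = s - b by omega]
  have split : ∀ c : Fin s, jacRec x p (k - s + a) (p + 1 - s + c) *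
      (if c = b then x (s - b) (p + 2) else if (c : ℕ) = b + 1 then 1 else 0) =
      (if c = b then x (s - b) (p + 2) * jacRec x p (k - s + a) (p + 1 - s + b) else 0) +
      (if (c : ℕ) = b + 1 then jacRec x p (k - s + a) (p + 1 - s + b + 1) else 0) := by
    intro c
    by_cases h1 : c = b
    · subst h1; simp; ring
    · by_cases h2 : (c : ℕ) = b + 1
      · simp [h1, h2, add_assoc]
      · simp [h1, h2]
  rw [Finset.sum_congr rfl fun c _ => split c, Finset.sum_add_distrib, Finset.sum_ite_eq',
    if_pos (Finset.mem_univ _), add_comm]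
  congr 1
  by_cases hlast : (b : ℕ) + 1 < s
  · rw [Finset.sum_eq_single (⟨b + 1, hlast⟩ : Fin s)]
    · simp
    · intro c _ hc
      rw [if_neg fun h => hc (Fin.ext h)]
    · simp
  · rw [jacRec_of_lt _ _ _ _ (by omega), if_neg (by omega), Finset.sum_eq_zero]
    intro c _
    rw [if_neg (by omega)]

lemma unitri_jacRec (x : ℕ → ℕ → ℝ) (p n : ℕ) : Unitri (jacRec x p) n :=
  ⟨fun i j _ h => by rw [jacRec_tri _ _ _ _ h.le, if_neg (by omega)],
    fun i _ => by rw [jacRec_tri _ _ _ _ le_rfl, if_pos rfl]⟩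

lemma solid_jacRec (x : ℕ → ℕ → ℝ) (p s k : ℕ) (hs : s ≤ k) (hk : k ≤ p + 1) :
    solid (jacRec x p) (p + 1) s k =
      ∏ i ∈ Finset.range s, ∏ r ∈ Finset.Ico (k + 1) (p + 2), x (i + 1) r := by
  induction p with
  | zero =>
    rcases Nat.lt_or_ge k 1 with h | h
    · obtain rfl : s = 0 := by omega
      simp [solid]
    · obtain rfl : k = 1 := by omega
      rw [solid_top (unitri_jacRec x 0 _) s hs]
      simp
  | succ p ih =>
    rcases Nat.lt_or_ge (p + 1) k with h | h
    · obtain rfl : k = p + 1 + 1 := by omega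
      rw [solid_top (unitri_jacRec x _ _) s hs]
      simp
    · rw [solid_step x p s k hs h, ih h, ← Finset.prod_mul_distrib]
      refine Finset.prod_congr rfl fun i _ => ?_
      rw [← Finset.prod_Ico_succ_top (by omega)]

lemma mul_Jmat (n k : ℕ) (c : ℝ) (A : Matrix (Fin n) (Fin n) ℝ) (i j : ℕ) (hj : j < n) :
    ent (A * Jmat n k c) i j =
      ent A i j + if j = k ∧ 1 ≤ k then c * ent A i (j - 1) else 0 := by
  by_cases hi : i < n
  · have hj' : j - 1 < n := by omega
    simp only [ent, hi, hj, hj', and_self, dif_pos, Jmat, mul_add, mul_one, Matrix.add_apply]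
    congr 1
    rw [Matrix.mul_apply]
    simp only [Matrix.of_apply]
    split_ifs with h
    · rw [Finset.sum_eq_single (⟨j - 1, hj'⟩ : Fin n)]
      · rw [if_pos ⟨by simp only []; omega, h.1⟩, mul_comm]
      · intro b _ hb
        rw [if_neg, mul_zero]
        rintro ⟨h1, h2⟩
        exact hb (Fin.ext (by simp only []; omega))
      · simp
    · refine Finset.sum_eq_zero fun b _ => ?_
      rw [if_neg (by omega), mul_zero]
  · simp [ent, hi]

/-- Right multiplication by the first `t` factors of `𝕁_{p+1}`. Since the indices of the factors
descend, each column receives a multiple of the still unchanged column on its left. -/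
lemma mul_block (n : ℕ) (x : ℕ → ℕ → ℝ) (p t : ℕ) (ht : t ≤ p + 1)
    (A : Matrix (Fin n) (Fin n) ℝ) (i j : ℕ) (hj : j < n) :
    ent (A * ((List.range t).map fun m => Jmat n (p + 1 - m) (x (m + 1) (p + 2))).prod) i j =
      ent A i j + if p + 1 - t < j ∧ j ≤ p + 1 then x (p + 2 - j) (p + 2) * ent A i (j - 1)
        else 0 := by
  induction t generalizing j with
  | zero =>
    rw [if_neg (by omega)]
    simp
  | succ t ih =>
    rw [List.range_succ, List.map_append, List.prod_append, List.map_singleton,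
      List.prod_singleton, ← mul_assoc, mul_Jmat _ _ _ _ _ _ hj, ih (by omega) _ hj]
    by_cases h : j = p + 1 - t
    · rw [if_neg (show ¬ (p + 1 - t < j ∧ j ≤ p + 1) by omega),
        if_pos (show j = p + 1 - t ∧ 1 ≤ p + 1 - t by omega),
        if_pos (show p + 1 - (t + 1) < j ∧ j ≤ p + 1 by omega), ih (by omega) _ (by omega),
        if_neg (show ¬ (p + 1 - t < j - 1 ∧ j - 1 ≤ p + 1) by omega),
        show p + 2 - j = t + 1 by omega]
      ring
    · rw [if_neg (show ¬ (j = p + 1 - t ∧ 1 ≤ p + 1 - t) by omega), add_zero]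
      congr 1
      exact if_congr (by omega) rfl rfl

lemma ent_partial (n : ℕ) (x : ℕ → ℕ → ℝ) (p i j : ℕ) (hi : i < n) (hj : j < n) :
    ent (((List.range p).map fun p =>
      (((List.range (p + 1)).map fun m =>
        Jmat n (p + 1 - m) (x (m + 1) (p + 2))).prod)).prod) i j = jacRec x p i j := by
  induction p generalizing j with
  | zero => simp [ent, hi, hj, jacRec, Matrix.one_apply]
  | succ p ih =>
    rw [List.range_succ, List.map_append, List.prod_append, List.map_singleton,
      List.prod_singleton, mul_block n x p (p + 1) le_rfl _ _ _ hj, ih _ hj]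
    cases j with
    | zero => simp [jacRec]
    | succ j =>
      rw [jacRec, Nat.add_sub_cancel, ih _ (by omega)]
      by_cases h : j ≤ p
      · rw [if_pos (by omega), if_pos h, show p + 2 - (j + 1) = p + 1 - j by omega]
      · rw [if_neg (by omega), if_neg h, zero_mul]

lemma solid_congr {f g : ℕ → ℕ → ℝ} {n : ℕ} (h : ∀ i j, i < n → j < n → f i j = g i j)
    (s k : ℕ) (hs : s ≤ k) (hk : k ≤ n) : solid f n s k = solid g n s k := by
  unfold solid
  congr 1
  ext a b
  exact h _ _ (by omega) (by omega)

lemma solid_of_jacobi {n : ℕ} (hn : 2 ≤ n) {M : Matrix (Fin n) (Fin n) ℝ} {x : ℕ → ℕ → ℝ}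
    (hx : IsJacobi n M x) (s k : ℕ) (hs : s ≤ k) (hk : k ≤ n) :
    solid (ent M) n s k = ∏ i ∈ Finset.range s, ∏ r ∈ Finset.Ico (k + 1) (n + 1), x (i + 1) r := by
  obtain ⟨p, rfl⟩ : ∃ p, n = p + 1 := ⟨n - 1, by omega⟩
  rw [← solid_jacRec x p s k hs hk]
  refine solid_congr (fun i j hi hj => ?_) s k hs hk
  rw [hx.2]
  exact ent_partial _ x p i j hi hj

lemma solid_ne_zero {n : ℕ} (hn : 2 ≤ n) {M : Matrix (Fin n) (Fin n) ℝ} {x : ℕ → ℕ → ℝ}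
    (hx : IsJacobi n M x) (s k : ℕ) (hs : s ≤ k) (hk : k ≤ n) : solid (ent M) n s k ≠ 0 := by
  rw [solid_of_jacobi hn hx s k hs hk]
  refine Finset.prod_ne_zero_iff.2 fun i hi => Finset.prod_ne_zero_iff.2 fun r hr => ?_
  rw [Finset.mem_range] at hi
  rw [Finset.mem_Ico] at hr
  exact (hx.1 _ _ (by omega) (by omega) (by omega)).ne'

lemma coord_of_jacobi {n : ℕ} (hn : 2 ≤ n) {M : Matrix (Fin n) (Fin n) ℝ} {x : ℕ → ℕ → ℝ}
    (hx : IsJacobi n M x) (k j : ℕ) (hk : 1 ≤ k) (hkj : k < j) (hj : j ≤ n) :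
    x k j = coord (solid (ent M) n) k j := by
  have nz := solid_ne_zero hn hx
  obtain ⟨k, rfl⟩ : ∃ k', k = k' + 1 := ⟨k - 1, by omega⟩
  obtain ⟨j, rfl⟩ : ∃ j', j = j' + 1 := ⟨j - 1, by omega⟩
  rw [coord, Nat.add_sub_cancel, Nat.add_sub_cancel,
    eq_div_iff (mul_ne_zero (nz _ _ (by omega) (by omega)) (nz _ _ (by omega) (by omega)))]
  rw [solid_of_jacobi hn hx (k + 1) j (by omega) (by omega),
    solid_of_jacobi hn hx (k + 1) (j + 1) (by omega) (by omega),
    solid_of_jacobi hn hx k j (by omega) (by omega),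
    solid_of_jacobi hn hx k (j + 1) (by omega) (by omega),
    Finset.prod_range_succ, Finset.prod_range_succ,
    Finset.prod_eq_prod_Ico_succ_bot (show j + 1 < n + 1 by omega) (fun r => x (k + 1) r)]
  ring

/-! ### Solid minors and the Gauss decomposition -/

lemma unitri_of_Npos {n : ℕ} {M : Matrix (Fin n) (Fin n) ℝ} (h : Npos n M) :
    Unitri (ent M) n := by
  refine ⟨fun i j hi hj => ?_, fun i hi => ?_⟩
  · rw [ent, dif_pos ⟨hi, hj.trans hi⟩]
    exact h.1.1 (show (⟨j, hj.trans hi⟩ : Fin n) < ⟨i, hi⟩ from hj)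
  · rw [ent, dif_pos ⟨hi, hi⟩]
    exact h.1.2 _

lemma Pmat_eq (n : ℕ) : Pmat n = (1 : Matrix (Fin n) (Fin n) ℝ).submatrix Fin.rev id := by
  ext i j
  rw [Pmat, Matrix.of_apply, Matrix.submatrix_apply, Matrix.one_apply]
  refine if_congr ?_ rfl rfl
  rw [Fin.ext_iff, Fin.val_rev, id]
  omega

lemma Pmat_mul (n : ℕ) (A : Matrix (Fin n) (Fin n) ℝ) (i j : Fin n) :
    (Pmat n * A) i j = A i.rev j := by
  rw [Pmat_eq, Matrix.mul_apply]
  simp [Matrix.one_apply]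

lemma mul_Pmat (n : ℕ) (A : Matrix (Fin n) (Fin n) ℝ) (i j : Fin n) :
    (A * Pmat n) i j = A i j.rev := by
  rw [Pmat_eq, Matrix.mul_apply]
  simp [Matrix.one_apply, Fin.rev_eq_iff]

/-- The Gauss decomposition `M P = (P M′ P) D M″`, entrywise. -/
lemma gauss {n : ℕ} {M M₁ M₂ D : Matrix (Fin n) (Fin n) ℝ} (h : Decomp n M M₁ M₂ D)
    (i j : ℕ) (hi : i < n) (hj : j < n) :
    ent M i (n - 1 - j) = ∑ l ∈ Finset.range n,
      ent M₁ (n - 1 - i) (n - 1 - l) * (ent D l l * ent M₂ l j) := by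
  obtain ⟨-, -, hD, he⟩ := h
  have he := congrFun (congrFun he (Fin.rev ⟨i, hi⟩)) ⟨j, hj⟩
  rw [mul_Pmat, Pmat_mul, Fin.rev_rev, Matrix.mul_assoc, Matrix.mul_apply] at he
  have hrev : ∀ a (ha : a < n), Fin.rev (⟨a, ha⟩ : Fin n) = ⟨n - 1 - a, by omega⟩ := by
    intro a ha
    ext
    simp only [Fin.val_rev]
    omega
  rw [ent, dif_pos ⟨hi, by omega⟩]
  rw [hrev j hj] at he
  rw [he, Finset.sum_range]
  refine Finset.sum_congr rfl fun l _ => ?_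
  rw [mul_Pmat, hrev i hi, show Fin.rev l = ⟨n - 1 - l, by omega⟩ from hrev l l.2]
  congr 1
  · rw [ent, dif_pos ⟨by omega, by omega⟩]
  · rw [Matrix.mul_apply, Finset.sum_eq_single l]
    · simp [ent, hj]
    · intro b _ hb
      rw [hD (Ne.symm hb), zero_mul]
    · simp

lemma solid_rev (f : ℕ → ℕ → ℝ) (n s k : ℕ) (hs : s ≤ k) (hk : k ≤ n) :
    solid f n s k =
      Matrix.det (Matrix.of fun a b : Fin s => f (k - 1 - a) (n - 1 - b)) := by
  rw [solid, ← Matrix.det_submatrix_equiv_self Fin.revPerm]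
  congr 1
  ext a b
  simp only [Matrix.submatrix_apply, Matrix.of_apply, Fin.revPerm_apply, Fin.val_rev]
  congr 1 <;> omega

/-- Cauchy–Binet in the first `s` columns of `M P = (P M′ P) D M″`. -/
lemma solid_prime_aux {n : ℕ} {M M₁ M₂ D : Matrix (Fin n) (Fin n) ℝ} (h : Decomp n M M₁ M₂ D)
    (s k : ℕ) (hs : s ≤ k) (hk : k ≤ n) :
    solid (ent M) n s k = ((Equiv.Perm.sign (Fin.revPerm : Equiv.Perm (Fin s)) : ℤ) : ℝ) *
      solid (ent M₁) n s (n - k + s) * ∏ l : Fin s, ent D l l := by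
  have hu := unitri_of_Npos h.2.1
  have hT : Matrix.det (Matrix.of fun l b : Fin s => ent D l l * ent M₂ l b) =
      ∏ l : Fin s, ent D l l := by
    rw [Matrix.det_of_isUpperTriangular]
    · refine Finset.prod_congr rfl fun l _ => ?_
      rw [Matrix.of_apply, hu.2 _ (by omega), mul_one]
    · intro a b hab
      rw [Matrix.of_apply, hu.1 a b (by omega) hab, mul_zero]
  rw [solid_rev _ _ _ _ hs hk, solid_rev _ _ _ _ (by omega) (by omega), ← hT,
    ← Matrix.det_permute, ← Matrix.det_mul]
  congr 1
  ext a b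
  rw [Matrix.mul_apply, Matrix.of_apply, gauss h _ _ (by omega) (by omega)]
  simp only [Matrix.submatrix_apply, Matrix.of_apply, Fin.revPerm_apply, Fin.val_rev, id]
  rw [← Finset.sum_range fun l =>
    ent M₁ (n - k + s - 1 - (s - (a + 1))) (n - 1 - l) * (ent D l l * ent M₂ l b)]
  symm
  rw [show n - k + s - 1 - (s - ((a : ℕ) + 1)) = n - 1 - (k - 1 - a) by omega]
  refine Finset.sum_subset (fun l hl => ?_) fun l hl hl' => ?_
  · rw [Finset.mem_range] at *
    omega
  · rw [Finset.mem_range] at *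
    rw [hu.1 l b hl (by omega), mul_zero, mul_zero]

lemma solid_prime {n : ℕ} {M M₁ M₂ D : Matrix (Fin n) (Fin n) ℝ} (h : Decomp n M M₁ M₂ D)
    (s k : ℕ) (hs : s ≤ k) (hk : k ≤ n) :
    solid (ent M) n s k = solid (ent M) n s s * solid (ent M₁) n s (n - k + s) := by
  rw [solid_prime_aux h s k hs hk, solid_prime_aux h s s le_rfl (hs.trans hk),
    Nat.sub_add_cancel (hs.trans hk), solid_top (unitri_of_Npos h.1) s (hs.trans hk)]
  ring

/-- The solid minor with parameters `s, k` is also the minor on rows `[1, k]` and columns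
`[1, k-s] ∪ [n-s+1, n]`. -/
lemma solid_eq_flag {f : ℕ → ℕ → ℝ} {n : ℕ} (hf : Unitri f n) (s k : ℕ) (hs : s ≤ k)
    (hk : k ≤ n) :
    Matrix.det (Matrix.of fun a b : Fin k => f a (if (b : ℕ) < k - s then b else n - k + b)) =
      solid f n s k := by
  obtain ⟨t, rfl⟩ : ∃ t, k = t + s := ⟨k - s, by omega⟩
  rw [← Matrix.det_submatrix_equiv_self finSumFinEquiv, ← Matrix.fromBlocks_toBlocks
    (Matrix.submatrix _ _ _)]
  have h21 : (Matrix.submatrix (Matrix.of fun a b : Fin (t + s) =>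
      f a (if (b : ℕ) < t + s - s then b else n - (t + s) + b))
      (finSumFinEquiv : Fin t ⊕ Fin s ≃ _) finSumFinEquiv).toBlocks₂₁ = 0 := by
    ext a b
    simp only [Matrix.toBlocks₂₁, Matrix.submatrix_apply, Matrix.of_apply,
      finSumFinEquiv_apply_left, finSumFinEquiv_apply_right, Fin.val_castAdd, Fin.val_natAdd,
      Matrix.zero_apply]
    rw [if_pos (by omega)]
    exact hf.1 _ _ (by omega) (by omega)
  rw [h21, Matrix.det_fromBlocks_zero₂₁, Matrix.det_of_isUpperTriangular, Finset.prod_eq_one,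
    one_mul, solid]
  · congr 1
    ext a b
    simp only [Matrix.toBlocks₂₂, Matrix.submatrix_apply, Matrix.of_apply,
      finSumFinEquiv_apply_right, Fin.val_natAdd]
    rw [if_neg (by omega)]
    congr 1 <;> omega
  · intro a _
    simp only [Matrix.toBlocks₁₁, Matrix.submatrix_apply, Matrix.of_apply,
      finSumFinEquiv_apply_left, Fin.val_castAdd]
    rw [if_pos (by omega)]
    exact hf.2 _ (by omega)
  · intro a b hab
    have hab : (b : ℕ) < a := hab
    simp only [Matrix.toBlocks₁₁, Matrix.submatrix_apply, Matrix.of_apply,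
      finSumFinEquiv_apply_left, Fin.val_castAdd]
    rw [if_pos (by omega)]
    exact hf.1 _ _ (by omega) hab

/-- Cauchy–Binet in the first `k` rows of `M P = (P M′ P) D M″`. -/
lemma solid_second_aux {n : ℕ} {M M₁ M₂ D : Matrix (Fin n) (Fin n) ℝ} (hM : Npos n M)
    (h : Decomp n M M₁ M₂ D) (s k : ℕ) (hs : s ≤ k) (hk : k ≤ n) :
    ((Equiv.Perm.sign (Fin.revPerm : Equiv.Perm (Fin k)) : ℤ) : ℝ) *
      solid (ent M) n (k - s) k = (∏ l : Fin k, ent D l l) * solid (ent M₂) n s k := by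
  have hu := unitri_of_Npos h.1
  have hT : Matrix.det (Matrix.of fun a l : Fin k =>
      ent M₁ (n - 1 - a) (n - 1 - l) * ent D l l) = ∏ l : Fin k, ent D l l := by
    rw [Matrix.det_of_isLowerTriangular]
    · refine Finset.prod_congr rfl fun l _ => ?_
      rw [Matrix.of_apply, hu.2 _ (by omega), one_mul]
    · intro a b hab
      have hab : (a : ℕ) < b := hab
      rw [Matrix.of_apply, hu.1 _ _ (by omega) (by omega), zero_mul]
  rw [← solid_eq_flag (unitri_of_Npos hM) (k - s) k (by omega) hk,
    ← solid_eq_flag (unitri_of_Npos h.2.1) s k hs hk, ← hT, ← Matrix.det_permute',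
    ← Matrix.det_mul]
  congr 1
  ext a b
  rw [Matrix.mul_apply]
  simp only [Matrix.submatrix_apply, Matrix.of_apply, Fin.revPerm_apply, Fin.val_rev, id]
  have hcol : (if k - ((b : ℕ) + 1) < k - (k - s) then k - ((b : ℕ) + 1)
      else n - k + (k - ((b : ℕ) + 1))) =
      n - 1 - (if (b : ℕ) < k - s then (b : ℕ) else n - k + b) := by
    split_ifs <;> omega
  rw [hcol, gauss h _ _ (by omega) (by split_ifs <;> omega), ← Finset.sum_range fun l =>
    ent M₁ (n - 1 - a) (n - 1 - l) * ent D l l *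
      ent M₂ l (if (b : ℕ) < k - s then (b : ℕ) else n - k + b)]
  symm
  simp only [mul_assoc]
  refine Finset.sum_subset (fun l hl => ?_) fun l hl hl' => ?_
  · rw [Finset.mem_range] at *
    omega
  · rw [Finset.mem_range] at *
    rw [hu.1 _ _ (by omega) (by omega), zero_mul]

lemma solid_second {n : ℕ} {M M₁ M₂ D : Matrix (Fin n) (Fin n) ℝ} (hM : Npos n M)
    (h : Decomp n M M₁ M₂ D) (s k : ℕ) (hs : s ≤ k) (hk : k ≤ n) :
    solid (ent M) n (k - s) k = solid (ent M) n k k * solid (ent M₂) n s k := by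
  have e1 := solid_second_aux hM h s k hs hk
  have e0 := solid_second_aux hM h 0 k (Nat.zero_le _) hk
  have hz : solid (ent M₂) n 0 k = 1 := by simp [solid]
  rw [hz, mul_one, Nat.sub_zero] at e0
  rw [← e0, mul_assoc] at e1
  refine mul_left_cancel₀ ?_ e1
  exact_mod_cast Units.ne_zero (Equiv.Perm.sign (Fin.revPerm : Equiv.Perm (Fin k)))

/-! ### The functions `y` and `ȳ` in terms of solid minors -/

/-- All solid minors in the meaningful range are nonzero. -/
def Nonvan (n : ℕ) (q : ℕ → ℕ → ℝ) : Prop := ∀ s k, s ≤ k → k ≤ n → q s k ≠ 0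

lemma ybv_eq_inv (x : ℕ → ℕ → ℝ) (i j : ℕ) : ybv x i j = (yv x i j)⁻¹ := by
  rw [ybv, yv, inv_div]

lemma yv_coord {n : ℕ} {q : ℕ → ℕ → ℝ} (hq : Nonvan n q) (i j : ℕ) (hi : 1 ≤ i) (hij : i < j)
    (hj : j + 1 ≤ n) :
    yv (coord q) i j = q i (j - 1) * q (i - 1) j * q (i + 1) (j + 1) /
      (q (i - 1) (j - 1) * q (i + 1) j * q i (j + 1)) := by
  have h1 := hq i j (by omega) (by omega)
  have h2 := hq (i - 1) (j - 1) (by omega) (by omega)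
  have h3 := hq (i + 1) j (by omega) (by omega)
  have h4 := hq i (j + 1) (by omega) (by omega)
  have h5 := hq (i + 1) (j + 1) (by omega) (by omega)
  rw [yv, coord, coord, Nat.add_sub_cancel, Nat.add_sub_cancel]
  field_simp

lemma nonvan_prime {n : ℕ} {q q' : ℕ → ℕ → ℝ} (hq : Nonvan n q)
    (h : ∀ s k, s ≤ k → k ≤ n → q s k = q s s * q' s (n - k + s)) : Nonvan n q' := by
  intro s k hs hk h0
  apply hq s (n - k + s) (by omega) (by omega)
  rw [h s (n - k + s) (by omega) (by omega), show n - (n - k + s) + s = k by omega, h0, mul_zero]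

lemma nonvan_second {n : ℕ} {q q' : ℕ → ℕ → ℝ} (hq : Nonvan n q)
    (h : ∀ s k, s ≤ k → k ≤ n → q (k - s) k = q k k * q' s k) : Nonvan n q' := by
  intro s k hs hk h0
  apply hq (k - s) k (by omega) (by omega)
  rw [h s k hs hk, h0, mul_zero]

lemma yv_prime {n : ℕ} {q q' : ℕ → ℕ → ℝ} (hq : Nonvan n q)
    (h : ∀ s k, s ≤ k → k ≤ n → q s k = q s s * q' s (n - k + s))
    (i j : ℕ) (hi : 1 ≤ i) (hij : i < j) (hj : j + 1 ≤ n) :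
    yv (coord q') i j = (yv (coord q) i (n + i - j))⁻¹ := by
  have hq' := nonvan_prime hq h
  -- Writing `j = i + d` and `n = j + 1 + m` removes all truncated subtractions.
  obtain ⟨i, rfl⟩ : ∃ i', i = i' + 1 := ⟨i - 1, by omega⟩
  obtain ⟨d, rfl⟩ : ∃ d, j = i + 1 + (d + 1) := ⟨j - i - 2, by omega⟩
  obtain ⟨m, rfl⟩ : ∃ m, n = i + 1 + (d + 1) + 1 + m := ⟨_, (Nat.add_sub_of_le hj).symm⟩
  have key : ∀ s k k', s ≤ k → k + k' = i + 1 + (d + 1) + 1 + m + s → s ≤ k' →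
      q s k = q s s * q' s k' := by
    intro s k k' h1 h2 h3
    rw [h s k h1 (by omega)]
    congr 2
    omega
  rw [show i + 1 + (d + 1) + 1 + m + (i + 1) - (i + 1 + (d + 1)) = i + 2 + m by omega,
    yv_coord hq' _ _ hi hij hj, yv_coord hq _ _ hi (by omega) (by omega),
    show i + 1 + (d + 1) - 1 = i + d + 1 by omega, show i + 2 + m - 1 = i + 1 + m by omega,
    Nat.add_sub_cancel,
    key (i + 1) (i + 1 + m) (i + 1 + (d + 1) + 1) (by omega) (by omega) (by omega),
    key (i + 1) (i + 2 + m + 1) (i + d + 1) (by omega) (by omega) (by omega),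
    key i (i + 2 + m) (i + d + 1) (by omega) (by omega) (by omega),
    key i (i + 1 + m) (i + 1 + (d + 1)) (by omega) (by omega) (by omega),
    key (i + 1 + 1) (i + 2 + m + 1) (i + 1 + (d + 1)) (by omega) (by omega) (by omega),
    key (i + 1 + 1) (i + 2 + m) (i + 1 + (d + 1) + 1) (by omega) (by omega) (by omega)]
  have c0 := hq i i le_rfl (by omega)
  have c1 := hq (i + 1) (i + 1) le_rfl (by omega)
  have c2 := hq (i + 1 + 1) (i + 1 + 1) le_rfl (by omega)
  have d1 := hq' i (i + d + 1) (by omega) (by omega)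
  have d2 := hq' i (i + 1 + (d + 1)) (by omega) (by omega)
  have d3 := hq' (i + 1) (i + d + 1) (by omega) (by omega)
  have d4 := hq' (i + 1) (i + 1 + (d + 1) + 1) (by omega) (by omega)
  have d5 := hq' (i + 1 + 1) (i + 1 + (d + 1)) (by omega) (by omega)
  have d6 := hq' (i + 1 + 1) (i + 1 + (d + 1) + 1) (by omega) (by omega)
  field_simp

lemma yv_second {n : ℕ} {q q' : ℕ → ℕ → ℝ} (hq : Nonvan n q)
    (h : ∀ s k, s ≤ k → k ≤ n → q (k - s) k = q k k * q' s k)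
    (i j : ℕ) (hi : 1 ≤ i) (hij : i < j) (hj : j + 1 ≤ n) :
    yv (coord q') i j = (yv (coord q) (j - i) j)⁻¹ := by
  have hq' := nonvan_second hq h
  obtain ⟨i, rfl⟩ : ∃ i', i = i' + 1 := ⟨i - 1, by omega⟩
  obtain ⟨d, rfl⟩ : ∃ d, j = i + 1 + (d + 1) := ⟨j - i - 2, by omega⟩
  have key : ∀ s s' k, s + s' = k → k ≤ n → q s k = q k k * q' s' k := by
    intro s s' k h1 h2
    rw [← h s' k (by omega) h2]
    congr 1
    omega
  rw [Nat.add_sub_cancel_left,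
    yv_coord hq' _ _ hi hij hj, yv_coord hq _ _ (by omega) (by omega) hj,
    show i + 1 + (d + 1) - 1 = i + d + 1 by omega, Nat.add_sub_cancel, Nat.add_sub_cancel,
    key (d + 1) i (i + d + 1) (by omega) (by omega),
    key d (i + 1) (i + d + 1) (by omega) (by omega),
    key d (i + 1 + 1) (i + 1 + (d + 1)) (by omega) (by omega),
    key (d + 1 + 1) i (i + 1 + (d + 1)) (by omega) (by omega),
    key (d + 1 + 1) (i + 1) (i + 1 + (d + 1) + 1) (by omega) (by omega),
    key (d + 1) (i + 1 + 1) (i + 1 + (d + 1) + 1) (by omega) (by omega)]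
  have c0 := hq (i + d + 1) (i + d + 1) le_rfl (by omega)
  have c1 := hq (i + 1 + (d + 1)) (i + 1 + (d + 1)) le_rfl (by omega)
  have c2 := hq (i + 1 + (d + 1) + 1) (i + 1 + (d + 1) + 1) le_rfl (by omega)
  have d1 := hq' i (i + d + 1) (by omega) (by omega)
  have d2 := hq' (i + 1) (i + d + 1) (by omega) (by omega)
  have d3 := hq' i (i + 1 + (d + 1)) (by omega) (by omega)
  have d4 := hq' (i + 1 + 1) (i + 1 + (d + 1)) (by omega) (by omega)
  have d5 := hq' (i + 1) (i + 1 + (d + 1) + 1) (by omega) (by omega)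
  have d6 := hq' (i + 1 + 1) (i + 1 + (d + 1) + 1) (by omega) (by omega)
  field_simp

lemma yv_of_jacobi {n : ℕ} (hn : 2 ≤ n) {M : Matrix (Fin n) (Fin n) ℝ} {x : ℕ → ℕ → ℝ}
    (hx : IsJacobi n M x) (i j : ℕ) (hi : 1 ≤ i) (hij : i < j) (hj : j + 1 ≤ n) :
    yv x i j = yv (coord (solid (ent M) n)) i j := by
  rw [yv, yv, coord_of_jacobi hn hx i j hi hij (by omega),
    coord_of_jacobi hn hx (i + 1) (j + 1) (by omega) (by omega) hj]

/-- Proposition 5 (`SY`): transformation properties of the functions `y_{ij}, ȳ_{ij}`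
under `M ↦ M′`, `M ↦ M″`, and the equality of their values on `((M′)″)′` and
`((M″)′)″`. -/
theorem stmt_12 (n : ℕ) (hn : 2 ≤ n)
    (M M₁ M₂ D A₁ A₂ E B₁ B₂ F C₁ C₂ Dc G₁ G₂ Dg : Matrix (Fin n) (Fin n) ℝ)
    (hM : Npos n M)
    (h1 : Decomp n M M₁ M₂ D)    -- `M₁ = M′`, `M₂ = M″`
    (h2 : Decomp n M₁ A₁ A₂ E)   -- `A₂ = (M′)″`
    (h3 : Decomp n M₂ B₁ B₂ F)   -- `B₁ = (M″)′`
    (h4 : Decomp n A₂ C₁ C₂ Dc)  -- `C₁ = ((M′)″)′`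
    (h5 : Decomp n B₁ G₁ G₂ Dg)  -- `G₂ = ((M″)′)″`
    (x x₁ x₂ xc xg : ℕ → ℕ → ℝ)
    (hx : IsJacobi n M x) (hx₁ : IsJacobi n M₁ x₁) (hx₂ : IsJacobi n M₂ x₂)
    (hxc : IsJacobi n C₁ xc) (hxg : IsJacobi n G₂ xg) :
    ∀ i j, 1 ≤ i → i < j → j ≤ n - 1 →
      yv x₁ i j = ybv x i (n + i - j) ∧
      yv x₂ i j = ybv x (j - i) j ∧
      yv xc i j = yv xg i j ∧
      ybv xc i j = ybv xg i j := by
  intro i j hi hij hj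
  have hj : j + 1 ≤ n := by omega
  have qM : Nonvan n (solid (ent M) n) := solid_ne_zero hn hx
  have r1 := solid_prime h1
  have r1' := solid_second hM h1
  have r2 := solid_second h1.1 h2
  have r3 := solid_prime h3
  have r4 := solid_prime h4
  have r5 := solid_second h3.1 h5
  have q1 := nonvan_prime qM r1
  have q2 := nonvan_second qM r1'
  have qA := nonvan_second q1 r2
  have qB := nonvan_prime q2 r3
  -- Both chains lead to `ȳ_{n-j,n-i}(M)`.
  have hc : yv xc i j = yv xg i j := by
    rw [yv_of_jacobi hn hxc i j hi hij hj, yv_of_jacobi hn hxg i j hi hij hj,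
      yv_prime qA r4 i j hi hij hj,
      yv_second q1 r2 i (n + i - j) hi (by omega) (by omega),
      yv_prime qM r1 (n + i - j - i) (n + i - j) (by omega) (by omega) (by omega),
      yv_second qB r5 i j hi hij hj,
      yv_prime q2 r3 (j - i) j (by omega) (by omega) hj,
      yv_second qM r1' (j - i) (n + (j - i) - j) (by omega) (by omega) (by omega),
      show n + i - j - i = n - j by omega,
      show n + (n - j) - (n + i - j) = n - i by omega,
      show n + (j - i) - j = n - i by omega,
      show n - i - (j - i) = n - j by omega]
  refine ⟨?_, ?_, hc, by rw [ybv_eq_inv, ybv_eq_inv, hc]⟩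
  · rw [ybv_eq_inv, yv_of_jacobi hn hx₁ i j hi hij hj,
      yv_of_jacobi hn hx i (n + i - j) hi (by omega) (by omega), yv_prime qM r1 i j hi hij hj]
  · rw [ybv_eq_inv, yv_of_jacobi hn hx₂ i j hi hij hj,
      yv_of_jacobi hn hx (j - i) j (by omega) (by omega) hj, yv_second qM r1' i j hi hij hj]

end
end
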